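/- Let A₁ and A₂ be subsets of ℝⁿ, let x ∈ A₁ ∩ A₂, and let K₁ and K₂ be Boltyanski approximating cones to A₁ and A₂ at x, respectively. If K₁ and K₂ are strongly transversal, then the sets A₁ and A₂ are not locally separated at x. -/

import Mathlib

open Set Metric Filter Asymptotics Topology

/-- A convex cone in a real vector space: contains `0`, is convex, and is
invariant under multiplication by nonnegative scalars. -/
def IsConvexCone {E : Type*} [AddCommMonoid E] [Module ℝ E] (C : Set E) : Prop :=
  (0 : E) ∈ C ∧ Convex ℝ C ∧ ∀ r : ℝ, 0 ≤ r → ∀ c ∈ C, r • c ∈ C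

/-- `K` is a Boltyanski approximating cone to `A` at `y`: there are `m : ℕ`, a convex cone
`C ⊆ ℝᵐ`, a linear map `L : ℝᵐ → E` with `K = L(C)`, a `δ > 0` and a continuous map
`F : C ∩ B_m(δ) → A` with `F 0 = y` and `F c = y + L c + o(c)`. -/
def IsBoltyanskiCone {E : Type*} [NormedAddCommGroup E] [NormedSpace ℝ E]
    (A : Set E) (y : E) (K : Set E) : Prop :=
  ∃ (m : ℕ) (C : Set (EuclideanSpace ℝ (Fin m)))
    (L : EuclideanSpace ℝ (Fin m) →ₗ[ℝ] E) (δ : ℝ)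
    (F : EuclideanSpace ℝ (Fin m) → E),
    IsConvexCone C ∧ K = ⇑L '' C ∧ 0 < δ ∧
    ContinuousOn F (C ∩ closedBall 0 δ) ∧
    (∀ c ∈ C ∩ closedBall 0 δ, F c ∈ A) ∧ F 0 = y ∧
    (fun c => F c - y - L c) =o[𝓝[C ∩ closedBall 0 δ] 0] (fun c => c)


/-- Two cones are transversal if `K₁ - K₂ = X`. -/
def Transversal {X : Type*} [AddCommGroup X] [Module ℝ X] (K₁ K₂ : Set X) : Prop :=
  {x | ∃ k₁ ∈ K₁, ∃ k₂ ∈ K₂, x = k₁ - k₂} = Set.univ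

/-- Two cones are strongly transversal if they are transversal and `K₁ ∩ K₂ ≠ {0}`. -/
def StronglyTransversal {X : Type*} [AddCommGroup X] [Module ℝ X] (K₁ K₂ : Set X) : Prop :=
  Transversal K₁ K₂ ∧ K₁ ∩ K₂ ≠ {0}

/-- `A₁` and `A₂` are locally separated at `y` if some neighborhood `N` of `y`
satisfies `A₁ ∩ A₂ ∩ N = {y}`. -/
def LocallySeparated {X : Type*} [TopologicalSpace X] (A₁ A₂ : Set X) (y : X) : Prop :=
  ∃ N ∈ nhds y, A₁ ∩ A₂ ∩ N = {y}

/-!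
The heart of the matter is a directional open mapping theorem. Let `F` be continuous on a convex
cone `C` near `0`, with one-sided derivative `L` at `0` mapping `C` onto the whole
finite-dimensional space, and let `c₀ ∈ C` with `L c₀ = 0`. Choosing a continuous section `S` of `L`
into `C` with `S 0 = c₀`, the rescaled maps `v ↦ ε⁻¹ (F (ε S v) - F 0)` tend to the identity
uniformly on compact sets, so by Brouwer's theorem they have zeros near `0` for small `ε`: the
equation `F = F 0` has solutions `ε c` with `c` close to `c₀`. For `F (c₁, c₂) = F₁ c₁ - F₂ c₂` on
`C₁ × C₂`, transversality is the surjectivity hypothesis, and a nonzero common vector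
`L₁ c₁ = L₂ c₂` of the two cones keeps the common points `F₁ (ε c₁') = F₂ (ε c₂')` away from `x`.

Brouwer's theorem is obtained by the argument of Milnor and Rogers. If a `C¹` map `f` is the
identity on the frontier of a compact set `s`, then `x ↦ x + t (f x - x)` is for small `t` a
bijection of `s` with positive Jacobian. Hence the integral over `s` of its Jacobian, a polynomial
in `t`, is the volume of `s`, also for `t = 1`. When `f` takes values in a sphere its Jacobian
vanishes, a contradiction.
-/

open MeasureTheory Module Polynomial Function
open scoped NNReal

section Jacobian

lemma inter_frontier_nonempty_of_isPreconnected {X : Type*} [TopologicalSpace X] {s t : Set X}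
    (ht : IsPreconnected t) (hts : (t ∩ s).Nonempty) (hts' : (t \ s).Nonempty) :
    (t ∩ frontier s).Nonempty := by
  obtain ⟨x, hxt, hxs⟩ := hts
  obtain ⟨y, hyt, hys⟩ := hts'
  have := isPreconnected_iff_preconnectedSpace.1 ht
  obtain ⟨z, hz⟩ : (frontier ((↑) ⁻¹' s : Set t)).Nonempty :=
    nonempty_frontier_iff.2 ⟨⟨⟨x, hxt⟩, mem_preimage.2 hxs⟩,
      fun h => hys (h ▸ mem_univ (⟨y, hyt⟩ : t) :)⟩
  exact ⟨z, z.2, continuous_subtype_val.frontier_preimage_subset s hz⟩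

lemma lipschitzWith_indicator_of_frontier_eq_zero {E F : Type*} [NormedAddCommGroup E]
    [NormedSpace ℝ E] [NormedAddCommGroup F] {K : ℝ≥0} {g : E → F} {s : Set E} (hs : IsClosed s)
    (hg : LipschitzOnWith K g s) (hg0 : ∀ x ∈ frontier s, g x = 0) :
    LipschitzWith K (s.indicator g) := by
  have norm_le_of_notMem {x y : E} (hx : x ∈ s) (hy : y ∉ s) : ‖g x‖ ≤ K * dist x y := by
    obtain ⟨z, hz, hzs⟩ := inter_frontier_nonempty_of_isPreconnected
      (convex_segment (𝕜 := ℝ) x y).isPreconnected ⟨x, left_mem_segment ℝ x y, hx⟩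
      ⟨y, right_mem_segment ℝ x y, hy⟩
    calc ‖g x‖ = dist (g x) (g z) := by rw [hg0 z hzs, dist_zero_right]
      _ ≤ K * dist x z := hg.dist_le_mul x hx z (hs.frontier_subset hzs)
      _ ≤ K * dist x y := by
        gcongr
        linarith [dist_add_dist_of_mem_segment hz, dist_nonneg (x := z) (y := y)]
  refine LipschitzWith.of_dist_le_mul fun x y => ?_
  by_cases hx : x ∈ s <;> by_cases hy : y ∈ s
  · simpa only [indicator_of_mem, hx, hy] using hg.dist_le_mul x hx y hy
  · simpa only [indicator_of_mem hx, indicator_of_notMem hy, dist_zero_right]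
      using norm_le_of_notMem hx hy
  · simpa only [indicator_of_notMem hx, indicator_of_mem hy, dist_zero_left, dist_comm x y]
      using norm_le_of_notMem hy hx
  · simp only [indicator_of_notMem hx, indicator_of_notMem hy, dist_self]
    positivity

lemma bijective_id_add_of_lipschitzWith {E : Type*} [NormedAddCommGroup E] [CompleteSpace E]
    {K : ℝ≥0} (hK : K < 1) {g : E → E} (hg : LipschitzWith K g) :
    Bijective (fun x => x + g x) := by
  refine bijective_iff_existsUnique _ |>.2 fun y => ?_
  have hcontr : ContractingWith K (fun x => y - g x) :=
    ⟨hK, LipschitzWith.of_dist_le_mul fun x x' => by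
      simpa only [dist_sub_left] using hg.dist_le_mul x x'⟩
  have hfix (x : E) : x + g x = y ↔ IsFixedPt (fun x => y - g x) x := by
    rw [IsFixedPt, sub_eq_iff_eq_add, eq_comm]
  simp_rw [hfix]
  exact ⟨_, hcontr.fixedPoint_isFixedPt, fun x hx => hcontr.fixedPoint_unique hx⟩

lemma bijOn_id_add_of_lipschitzOnWith {E : Type*} [NormedAddCommGroup E] [NormedSpace ℝ E]
    [CompleteSpace E] {K : ℝ≥0} (hK : K < 1) {g : E → E} {s : Set E} (hs : IsClosed s)
    (hg : LipschitzOnWith K g s) (hg0 : ∀ x ∈ frontier s, g x = 0) :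
    BijOn (fun x => x + g x) s s := by
  have hbij := bijective_id_add_of_lipschitzWith hK
    (lipschitzWith_indicator_of_frontier_eq_zero hs hg hg0)
  have hcompl : BijOn (fun x => x + s.indicator g x) sᶜ sᶜ :=
    (bijOn_id sᶜ).congr fun x hx => by simp [indicator_of_notMem hx]
  have hbijOn := hcompl.compl hbij
  rw [compl_compl] at hbijOn
  exact hbijOn.congr fun x hx => by simp only [indicator_of_mem hx]

lemma exists_polynomial_eval_eq_det_id_add_smul {R M : Type*} [CommRing R] [Nontrivial R]
    [AddCommGroup M] [Module R M] [Module.Free R M] [Module.Finite R M] (A : M →ₗ[R] M) :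
    ∃ p : R[X], p.natDegree ≤ finrank R M ∧
      ∀ t : R, p.eval t = LinearMap.det (LinearMap.id + t • A) := by
  classical
  let b := Module.finBasis R M
  refine ⟨((X : R[X]) • (LinearMap.toMatrix b b A).map C + (1 : Matrix _ _ R).map C).det, ?_,
    fun t => ?_⟩
  · simpa only [Fintype.card_fin] using natDegree_det_X_add_C_le (LinearMap.toMatrix b b A) 1
  · rw [← LinearMap.det_toMatrix b, ← coe_evalRingHom, RingHom.map_det]
    congr 1
    ext i j
    simp [Matrix.one_apply, apply_ite, add_comm, mul_comm t]

lemma integral_eval_eq_of_infinite {α : Type*} [MeasurableSpace α] {μ : Measure α} {n : ℕ}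
    {p : α → ℝ[X]} (hdeg : ∀ a, (p a).natDegree ≤ n)
    (hint : ∀ t, Integrable (fun a => (p a).eval t) μ) {T : Set ℝ} (hT : T.Infinite) {v : ℝ}
    (hv : ∀ t ∈ T, ∫ a, (p a).eval t ∂μ = v) (t : ℝ) : ∫ a, (p a).eval t ∂μ = v := by
  obtain ⟨s, hsT, hcard⟩ := hT.exists_subset_card_eq (n + 1)
  have hinj : InjOn (id : ℝ → ℝ) s := injOn_id _
  have hinterp (a : α) : (p a).eval t = ∑ i ∈ s, (p a).eval i * (Lagrange.basis s id i).eval t := by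
    have hlt : (p a).degree < s.card :=
      degree_le_natDegree.trans_lt (by rw [hcard]; exact_mod_cast Nat.lt_succ_of_le (hdeg a))
    conv_lhs => rw [Lagrange.eq_interpolate hinj hlt, Lagrange.interpolate_apply]
    simp only [eval_finsetSum, eval_mul, eval_C, id]
  calc ∫ a, (p a).eval t ∂μ
      = ∑ i ∈ s, (∫ a, (p a).eval i ∂μ) * (Lagrange.basis s id i).eval t := by
        simp_rw [hinterp, ← integral_mul_const]
        exact integral_finsetSum _ fun i _ => (hint i).mul_const _
    _ = v * (∑ i ∈ s, Lagrange.basis s id i).eval t := by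
        rw [eval_finsetSum, Finset.mul_sum]
        exact Finset.sum_congr rfl fun i hi => by rw [hv i (hsT hi)]
    _ = v := by
        rw [Lagrange.sum_basis hinj (Finset.card_pos.1 (by omega)), eval_one, mul_one]

lemma eventually_forall_det_id_add_smul_pos {X E : Type*} [TopologicalSpace X]
    [NormedAddCommGroup E] [NormedSpace ℝ E] {A : X → E →L[ℝ] E} (hA : Continuous A) {s : Set X}
    (hs : IsCompact s) :
    ∀ᶠ t in 𝓝 (0 : ℝ), ∀ x ∈ s, 0 < (ContinuousLinearMap.id ℝ E + t • A x).det := by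
  refine hs.eventually_forall_of_forall_eventually fun x _ =>
    Tendsto.eventually_const_lt zero_lt_one (Continuous.tendsto' ?_ _ _ ?_)
  · exact ContinuousLinearMap.continuous_det.comp (by fun_prop)
  · simp [ContinuousLinearMap.det]

section ChangeOfVariables

variable {E : Type*} [NormedAddCommGroup E] [NormedSpace ℝ E] [FiniteDimensional ℝ E]
  [MeasurableSpace E] [BorelSpace E] (μ : Measure E) [μ.IsAddHaarMeasure]

lemma eventually_setIntegral_det_id_add_smul_fderiv_eq {g : E → E} (hg : ContDiff ℝ 1 g)
    {s : Set E} (hs : IsCompact s) (hg0 : ∀ x ∈ frontier s, g x = 0) :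
    ∀ᶠ t in 𝓝 (0 : ℝ), ∫ x in s, (ContinuousLinearMap.id ℝ E + t • fderiv ℝ g x).det ∂μ =
      μ.real s := by
  have := FiniteDimensional.complete ℝ E
  obtain ⟨K, hK⟩ := hg.locallyLipschitz.locallyLipschitzOn.exists_lipschitzOnWith_of_compact hs
  have hsmall : ∀ᶠ t in 𝓝 (0 : ℝ), ‖t‖₊ * K < 1 := by
    refine Tendsto.eventually_lt_const zero_lt_one ?_
    exact Continuous.tendsto' (by fun_prop) _ _ (by simp)
  have hpos : ∀ᶠ t in 𝓝 (0 : ℝ), ∀ x ∈ s,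
      0 < (ContinuousLinearMap.id ℝ E + t • fderiv ℝ g x).det :=
    eventually_forall_det_id_add_smul_pos (hg.continuous_fderiv one_ne_zero) hs
  filter_upwards [hsmall, hpos] with t ht htpos
  have hbij : BijOn (fun x => x + t • g x) s s :=
    bijOn_id_add_of_lipschitzOnWith ht hs.isClosed
      (LipschitzOnWith.of_dist_le_mul fun x hx y hy => by
        simpa [dist_smul₀, mul_assoc] using
          mul_le_mul_of_nonneg_left (hK.dist_le_mul x hx y hy) (norm_nonneg t))
      fun x hx => by rw [hg0 x hx, smul_zero]
  have hderiv (x : E) : HasFDerivAt (fun x => x + t • g x)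
      (ContinuousLinearMap.id ℝ E + t • fderiv ℝ g x) x :=
    (hasFDerivAt_id x).add ((hg.differentiable one_ne_zero x).hasFDerivAt.const_smul t)
  calc ∫ x in s, (ContinuousLinearMap.id ℝ E + t • fderiv ℝ g x).det ∂μ
      = ∫ x in s, |(ContinuousLinearMap.id ℝ E + t • fderiv ℝ g x).det| • (1 : ℝ) ∂μ :=
        setIntegral_congr_fun hs.measurableSet fun x hx => by
          simp only [smul_eq_mul, mul_one, abs_of_pos (htpos x hx)]
    _ = ∫ _ in (fun x => x + t • g x) '' s, (1 : ℝ) ∂μ :=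
        (integral_image_eq_integral_abs_det_fderiv_smul μ hs.measurableSet
          (fun x _ => (hderiv x).hasFDerivWithinAt) hbij.injOn fun _ => (1 : ℝ)).symm
    _ = μ.real s := by rw [hbij.image_eq, setIntegral_const, smul_eq_mul, mul_one]

lemma setIntegral_det_fderiv_eq_measureReal {f : E → E} (hf : ContDiff ℝ 1 f) {s : Set E}
    (hs : IsCompact s) (hfix : ∀ x ∈ frontier s, f x = x) :
    ∫ x in s, (fderiv ℝ f x).det ∂μ = μ.real s := by
  have hg : ContDiff ℝ 1 fun x => f x - x := hf.sub contDiff_id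
  have hpoly (x : E) : ∃ p : ℝ[X], p.natDegree ≤ finrank ℝ E ∧
      ∀ t, p.eval t = (ContinuousLinearMap.id ℝ E + t • fderiv ℝ (fun x => f x - x) x).det :=
    exists_polynomial_eval_eq_det_id_add_smul (fderiv ℝ (fun x => f x - x) x : E →ₗ[ℝ] E)
  choose p hdeg hp using hpoly
  have hcont (t : ℝ) : Continuous fun x => (p x).eval t := by
    simp_rw [hp]
    have := hg.continuous_fderiv one_ne_zero
    exact ContinuousLinearMap.continuous_det.comp (by fun_prop)
  have hsmall := eventually_setIntegral_det_id_add_smul_fderiv_eq μ hg hs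
    fun x hx => sub_eq_zero.2 (hfix x hx)
  have h1 := integral_eval_eq_of_infinite (μ := μ.restrict s) hdeg
    (fun t => (hcont t).continuousOn.integrableOn_compact hs) (infinite_of_mem_nhds 0 hsmall)
    (fun t ht => by simpa only [hp] using mem_ofPred.1 ht) 1
  refine Eq.trans (integral_congr_ae (.of_forall fun x => ?_)) h1
  have hfd : fderiv ℝ (fun x => f x - x) x = fderiv ℝ f x - ContinuousLinearMap.id ℝ E := by
    rw [fderiv_fun_sub (hf.differentiable one_ne_zero x) differentiableAt_fun_id, fderiv_fun_id]
  rw [hp, hfd, one_smul, add_sub_cancel]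

end ChangeOfVariables

lemma det_fderiv_eq_zero_of_eventually_norm_eq {E : Type*} [NormedAddCommGroup E]
    [InnerProductSpace ℝ E] [FiniteDimensional ℝ E] {f : E → E} {x : E}
    (hf : DifferentiableAt ℝ f x) (hnorm : ∀ᶠ y in 𝓝 x, ‖f y‖ = ‖f x‖) (hx : f x ≠ 0) :
    (fderiv ℝ f x).det = 0 := by
  by_contra hdet
  obtain ⟨v, hv⟩ := ((fderiv ℝ f x).toContinuousLinearEquivOfDetNeZero hdet).surjective (f x)
  have hsq : HasFDerivAt (fun y => ‖f y‖ ^ 2) (0 : E →L[ℝ] ℝ) x :=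
    (hasFDerivAt_const (‖f x‖ ^ 2) x).congr_of_eventuallyEq <|
      hnorm.mono fun y hy => by simp only [hy]
  have hzero := congr($((hf.hasFDerivAt.norm_sq).unique hsq) v)
  rw [ContinuousLinearMap.toContinuousLinearEquivOfDetNeZero_apply] at hv
  simp [hv, hx] at hzero

lemma exists_norm_ne_of_frontier_eq_self {E : Type*} [NormedAddCommGroup E]
    [InnerProductSpace ℝ E] [FiniteDimensional ℝ E] {s : Set E} (hs : IsCompact s)
    (hs' : (interior s).Nonempty) {f : E → E} (hf : ContDiff ℝ 1 f)
    (hfix : ∀ x ∈ frontier s, f x = x) {r : ℝ} (hr : r ≠ 0) : ∃ x, ‖f x‖ ≠ r := by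
  by_contra! hnorm
  let _ : MeasurableSpace E := borel E
  have : BorelSpace E := ⟨rfl⟩
  have hdet (x : E) : (fderiv ℝ f x).det = 0 :=
    det_fderiv_eq_zero_of_eventually_norm_eq (hf.differentiable one_ne_zero x)
      (.of_forall fun y => by rw [hnorm, hnorm]) (norm_ne_zero_iff.1 (by rwa [hnorm]))
  have hzero : Measure.addHaar.real s = 0 := by
    simp [← setIntegral_det_fderiv_eq_measureReal Measure.addHaar hf hs hfix, hdet]
  rw [measureReal_eq_zero_iff hs.measure_ne_top] at hzero
  exact (Measure.measure_pos_of_nonempty_interior Measure.addHaar hs').ne' hzero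

end Jacobian

section FixedPoint

lemma exists_isFixedPt_of_hasCompactSupport_of_innerProductSpace {E : Type*} [NormedAddCommGroup E]
    [InnerProductSpace ℝ E] [FiniteDimensional ℝ E] {f : E → E} (hf : Continuous f)
    (hsupp : HasCompactSupport f) : ∃ x, IsFixedPt f x := by
  by_contra! hfp
  have hdist : ∀ x, 0 < ‖x - f x‖ := fun x => norm_pos_iff.2 (sub_ne_zero.2 (Ne.symm (hfp x)))
  obtain ⟨g, hg, hgf, hgsupp⟩ := hf.exists_contDiff_approx 1 (by fun_prop) hdist
  have hne (x : E) : x - g x ≠ 0 := fun h => by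
    have := hgf x
    rw [← sub_eq_zero.1 h, dist_eq_norm] at this
    exact this.ne rfl
  obtain ⟨r, hr, hball⟩ := hsupp.isCompact.isBounded.subset_ball_lt 0 0
  have hfix : ∀ x ∈ frontier (closedBall (0 : E) r), (r / ‖x - g x‖) • (x - g x) = x := by
    intro x hx
    have hxr : ‖x‖ = r := mem_sphere_zero_iff_norm.1 (frontier_closedBall_subset_sphere hx)
    have hgx : g x = 0 := notMem_support.1 fun h => by
      have := mem_ball_zero_iff.1 (hball (subset_tsupport f (hgsupp h)))
      exact this.ne hxr
    rw [hgx, sub_zero, hxr, div_self hr.ne', one_smul]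
  have hcontDiff : ContDiff ℝ 1 fun x => (r / ‖x - g x‖) • (x - g x) := by
    have hsub : ContDiff ℝ 1 fun x => x - g x := contDiff_id.sub hg
    exact (contDiff_const.div (hsub.norm ℝ hne) fun x => norm_ne_zero_iff.2 (hne x)).smul hsub
  obtain ⟨x, hx⟩ := exists_norm_ne_of_frontier_eq_self (isCompact_closedBall (0 : E) r)
    ⟨0, ball_subset_interior_closedBall (mem_ball_self hr)⟩ hcontDiff hfix hr.ne'
  refine hx ?_
  rw [norm_smul, norm_div, norm_norm, Real.norm_of_nonneg hr.le,
    div_mul_cancel₀ _ (norm_ne_zero_iff.2 (hne x))]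

variable {E : Type*} [NormedAddCommGroup E] [NormedSpace ℝ E] [FiniteDimensional ℝ E]

lemma exists_isFixedPt_of_hasCompactSupport {f : E → E} (hf : Continuous f)
    (hsupp : HasCompactSupport f) : ∃ x, IsFixedPt f x := by
  let e := toEuclidean (E := E)
  obtain ⟨x, hx⟩ := exists_isFixedPt_of_hasCompactSupport_of_innerProductSpace
    (f := e ∘ f ∘ e.symm) (by fun_prop)
    ((hsupp.comp_homeomorph e.symm.toHomeomorph).comp_left (map_zero e))
  exact ⟨e.symm x, e.injective <| hx.trans (e.apply_symm_apply x).symm⟩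

lemma exists_isFixedPt_of_isBounded_range {f : E → E} (hf : Continuous f)
    (hbdd : Bornology.IsBounded (range f)) : ∃ x, IsFixedPt f x := by
  obtain ⟨r, -, hr⟩ := hbdd.subset_closedBall_lt 0 0
  obtain ⟨χ, hχ1, -, hχsupp, hχ01⟩ := exists_continuous_one_zero_of_isCompact
    (isCompact_closedBall (0 : E) r) isClosed_empty (disjoint_empty _)
  obtain ⟨x, hx⟩ := exists_isFixedPt_of_hasCompactSupport (χ.continuous.smul hf) hχsupp.smul_right
  have hxr : x ∈ closedBall (0 : E) r := by
    rw [mem_closedBall_zero_iff]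
    calc ‖x‖ = χ x * ‖f x‖ := by
          conv_lhs => rw [← hx.eq]
          exact norm_smul_of_nonneg (hχ01 x).1 _
      _ ≤ ‖f x‖ := mul_le_of_le_one_left (norm_nonneg _) (hχ01 x).2
      _ ≤ r := mem_closedBall_zero_iff.1 (hr (mem_range_self x))
  exact ⟨x, by simpa [IsFixedPt, hχ1 hxr] using hx⟩

lemma exists_isFixedPt_of_mapsTo_closedBall {y : E} {r : ℝ} (hr : 0 < r) {f : E → E}
    (hf : ContinuousOn f (closedBall y r)) (hmaps : MapsTo f (closedBall y r) (closedBall y r)) :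
    ∃ x ∈ closedBall y r, IsFixedPt f x := by
  have := instTietzeExtensionClosedBall ℝ y hr
  obtain ⟨g, hg, hgf⟩ := ContinuousMap.exists_forall_mem_restrict_eq isClosed_closedBall
    ⟨_, hf.domRestrict⟩ (fun x => hmaps x.2)
  obtain ⟨x, hx⟩ := exists_isFixedPt_of_isBounded_range g.continuous
    (isBounded_closedBall.subset (range_subset_iff.2 hg))
  have hxr : x ∈ closedBall y r := hx ▸ hg x
  exact ⟨x, hxr, congr($hgf ⟨x, hxr⟩).symm.trans hx⟩

lemma exists_eq_zero_of_norm_sub_self_le {r : ℝ} (hr : 0 < r) {f : E → E}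
    (hf : ContinuousOn f (closedBall 0 r)) (hle : ∀ v ∈ closedBall 0 r, ‖f v - v‖ ≤ r) :
    ∃ v ∈ closedBall 0 r, f v = 0 := by
  obtain ⟨v, hv, hfix⟩ := exists_isFixedPt_of_mapsTo_closedBall hr (f := fun v => v - f v)
    (continuousOn_id.sub hf)
    (fun v hv => by simpa only [mem_closedBall_zero_iff, norm_sub_rev] using hle v hv)
  exact ⟨v, hv, sub_eq_self.1 hfix⟩

end FixedPoint

namespace IsConvexCone

lemma add_mem {E : Type*} [AddCommGroup E] [Module ℝ E] {C : Set E} (hC : IsConvexCone C)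
    {a b : E} (ha : a ∈ C) (hb : b ∈ C) : a + b ∈ C := by
  have hmid := hC.2.2 2 zero_le_two _ (hC.2.1.midpoint_mem ha hb)
  rwa [two_smul, midpoint_add_self] at hmid

lemma sum_mem {E ι : Type*} [AddCommGroup E] [Module ℝ E] {C : Set E} (hC : IsConvexCone C)
    {s : Finset ι} {f : ι → E} (hf : ∀ i ∈ s, f i ∈ C) : ∑ i ∈ s, f i ∈ C :=
  Finset.sum_induction f (· ∈ C) (fun _ _ => hC.add_mem) hC.1 hf

lemma prod {E F : Type*} [AddCommMonoid E] [Module ℝ E] [AddCommMonoid F] [Module ℝ F]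
    {C : Set E} {D : Set F} (hC : IsConvexCone C) (hD : IsConvexCone D) :
    IsConvexCone (C ×ˢ D) :=
  ⟨⟨hC.1, hD.1⟩, hC.2.1.prod hD.2.1, fun r hr _ hc => ⟨hC.2.2 r hr _ hc.1, hD.2.2 r hr _ hc.2⟩⟩

lemma exists_continuous_rightInverse_through {W E : Type*} [AddCommGroup W] [Module ℝ W]
    [TopologicalSpace W] [ContinuousAdd W] [ContinuousSMul ℝ W] [AddCommGroup E] [Module ℝ E]
    [TopologicalSpace E] [IsTopologicalAddGroup E] [ContinuousSMul ℝ E] [T2Space E]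
    [FiniteDimensional ℝ E] {C : Set W} (hC : IsConvexCone C) {L : W →ₗ[ℝ] E}
    (hL : SurjOn L C univ) {c₀ : W} (hc₀ : c₀ ∈ C) :
    ∃ S : E → W, Continuous S ∧ S (L c₀) = c₀ ∧ ∀ v, S v ∈ C ∧ L (S v) = v := by
  choose a ha hLa using fun v => hL (mem_univ v)
  let b := finBasis ℝ E
  have hcoord (j) : Continuous (b.coord j) := (b.coord j).continuous_of_finiteDimensional
  let S (v : E) : W := ∑ j, ((b.coord j v)⁺ • a (b j) + (b.coord j v)⁻ • a (-b j))
  have hcont : Continuous S := continuous_finsetSum _ fun j _ =>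
    ((continuous_posPart.comp (hcoord j)).smul continuous_const).add
      ((continuous_negPart.comp (hcoord j)).smul continuous_const)
  have hS0 : S 0 = 0 := by
    simp only [S, map_zero, posPart_zero, negPart_zero, zero_smul, add_zero, Finset.sum_const_zero]
  have hSC (v : E) : S v ∈ C := hC.sum_mem fun j _ =>
    hC.add_mem (hC.2.2 _ (posPart_nonneg _) _ (ha _)) (hC.2.2 _ (negPart_nonneg _) _ (ha _))
  have hLS (v : E) : L (S v) = v := by
    simp only [S, map_sum, map_add, map_smul, hLa, smul_neg, ← sub_eq_add_neg, ← sub_smul,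
      posPart_sub_negPart, b.coord_apply, b.sum_repr]
  refine ⟨fun v => c₀ + S (v - L c₀), by fun_prop, ?_, fun v => ⟨hC.add_mem hc₀ (hSC _), ?_⟩⟩
  · simp only [sub_self, hS0, add_zero]
  · rw [map_add, hLS, add_sub_cancel]

lemma tendsto_smul {W : Type*} [AddCommMonoid W] [Module ℝ W] [TopologicalSpace W]
    [ContinuousSMul ℝ W] {C : Set W} (hC : IsConvexCone C) (c₀ : W) :
    Tendsto (fun p : ℝ × W => p.1 • p.2) (𝓝[>] 0 ×ˢ 𝓝[C] c₀) (𝓝[C] 0) := by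
  refine tendsto_nhdsWithin_iff.2 ⟨?_, ?_⟩
  · rw [← nhdsWithin_prod_eq]
    exact (continuous_smul.tendsto' _ _ (zero_smul ℝ c₀)).mono_left nhdsWithin_le_nhds
  · filter_upwards [prod_mem_prod self_mem_nhdsWithin self_mem_nhdsWithin] with p hp
    exact hC.2.2 _ (le_of_lt hp.1) _ hp.2

section Derivative

variable {W E : Type*} [NormedAddCommGroup W] [NormedSpace ℝ W] [NormedAddCommGroup E]
  [NormedSpace ℝ E] {C : Set W} {F : W → E} {L : W →L[ℝ] E}

lemma tendsto_slope (hC : IsConvexCone C) (hF : HasFDerivWithinAt F L C 0) (c₀ : W) :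
    Tendsto (fun p : ℝ × W => p.1⁻¹ • (F (p.1 • p.2) - F 0)) (𝓝[>] 0 ×ˢ 𝓝[C] c₀)
      (𝓝 (L c₀)) := by
  obtain ⟨htendsto, hmem⟩ := tendsto_nhdsWithin_iff.1 (hC.tendsto_smul c₀)
  have hunscale : Tendsto (fun p : ℝ × W => p.1⁻¹ • p.1 • p.2) (𝓝[>] 0 ×ˢ 𝓝[C] c₀) (𝓝 c₀) := by
    refine (tendsto_snd.mono_right nhdsWithin_le_nhds).congr' ?_
    filter_upwards [prod_mem_prod self_mem_nhdsWithin univ_mem] with p hp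
    rw [inv_smul_smul₀ (ne_of_gt hp.1)]
  simpa only [zero_add] using
    hF.lim htendsto (by simpa only [zero_add] using hmem) hunscale

lemma eventually_ne (hC : IsConvexCone C) (hF : HasFDerivWithinAt F L C 0) {c₀ : W}
    (hc₀ : L c₀ ≠ 0) : ∀ᶠ p : ℝ × W in 𝓝[>] 0 ×ˢ 𝓝[C] c₀, F (p.1 • p.2) ≠ F 0 := by
  filter_upwards [(hC.tendsto_slope hF c₀).eventually_ne hc₀] with p hp heq
  exact hp (by rw [heq, sub_self, smul_zero])

lemma frequently_eq [FiniteDimensional ℝ E] (hC : IsConvexCone C)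
    {D : Set W} (hD : D ∈ 𝓝[C] 0) (hcont : ContinuousOn F D) (hF : HasFDerivWithinAt F L C 0)
    (hsurj : SurjOn L C univ) {c₀ : W} (hc₀ : c₀ ∈ C) (hLc₀ : L c₀ = 0) :
    ∃ᶠ p : ℝ × W in 𝓝[>] 0 ×ˢ 𝓝[C] c₀, F (p.1 • p.2) = F 0 := by
  obtain ⟨S, hScont, hS0, hS⟩ :=
    hC.exists_continuous_rightInverse_through (L := L.toLinearMap) hsurj hc₀
  rw [ContinuousLinearMap.coe_coe, hLc₀] at hS0
  have hSC (v : E) : Tendsto S (𝓝 v) (𝓝[C] S v) :=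
    tendsto_nhdsWithin_iff.2 ⟨hScont.tendsto v, .of_forall fun w => (hS w).1⟩
  have hprod (v : E) : Tendsto (fun p : ℝ × E => (p.1, S p.2)) (𝓝[>] 0 ×ˢ 𝓝 v)
      (𝓝[>] 0 ×ˢ 𝓝[C] S v) := tendsto_id.prodMap (hSC v)
  refine frequently_iff.2 fun {U} hU => ?_
  obtain ⟨U₁, hU₁, U₂, hU₂, hU⟩ := mem_prod_iff.1 hU
  have hSU₂ : ∀ᶠ v in 𝓝 0, S v ∈ U₂ := hSC 0 (by rwa [hS0])
  obtain ⟨r, hr, hball⟩ := nhds_basis_closedBall.eventually_iff.1 hSU₂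
  have hlocal (v : E) : ∀ᶠ p : ℝ × E in 𝓝[>] 0 ×ˢ 𝓝 v, p.1 • S p.2 ∈ D ∧
      ‖p.1⁻¹ • (F (p.1 • S p.2) - F 0) - p.2‖ ≤ r := by
    refine (((hC.tendsto_smul _).comp (hprod v)).eventually hD).and ?_
    have hlim := (((hC.tendsto_slope hF _).comp (hprod v)).sub tendsto_snd).norm
    have hLv : L (S v) = v := (hS v).2
    rw [hLv, sub_self, norm_zero] at hlim
    exact hlim.eventually_le_const hr
  have hunif : ∀ᶠ ε in 𝓝[>] (0 : ℝ), ∀ v ∈ closedBall 0 r, ε • S v ∈ D ∧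
      ‖ε⁻¹ • (F (ε • S v) - F 0) - v‖ ≤ r := by
    have := (isCompact_closedBall (0 : E) r).mem_prod_nhdsSet_of_forall fun v _ => hlocal v
    exact (Eventually.curry this).mono fun ε hε => hε.self_of_nhdsSet
  obtain ⟨ε, ⟨hεU₁, hεpos⟩, hε⟩ := ((Eventually.and hU₁ self_mem_nhdsWithin).and hunif).exists
  obtain ⟨v, hv, hzero⟩ := exists_eq_zero_of_norm_sub_self_le hr
    (f := fun v => ε⁻¹ • (F (ε • S v) - F 0))
    (((hcont.comp (by fun_prop) fun v hv => (hε v hv).1).sub continuousOn_const).const_smul _)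
    fun v hv => (hε v hv).2
  exact ⟨(ε, S v), hU ⟨hεU₁, hball hv⟩,
    sub_eq_zero.1 ((smul_eq_zero_iff_right (inv_ne_zero (ne_of_gt hεpos))).1 hzero)⟩

end Derivative

end IsConvexCone

section Transversal

variable {W₁ W₂ E : Type*}

lemma Transversal.surjOn_sub [AddCommGroup E] [Module ℝ E] {L₁ : W₁ → E} {L₂ : W₂ → E}
    {C₁ : Set W₁} {C₂ : Set W₂} (h : Transversal (L₁ '' C₁) (L₂ '' C₂)) :
    SurjOn (fun c => L₁ c.1 - L₂ c.2) (C₁ ×ˢ C₂) univ := by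
  intro v _
  obtain ⟨_, ⟨c₁, hc₁, rfl⟩, _, ⟨c₂, hc₂, rfl⟩, rfl⟩ := h.symm.subset (mem_univ v)
  exact ⟨(c₁, c₂), ⟨hc₁, hc₂⟩, rfl⟩

lemma Transversal.finiteDimensional [AddCommGroup W₁] [Module ℝ W₁] [FiniteDimensional ℝ W₁]
    [AddCommGroup W₂] [Module ℝ W₂] [FiniteDimensional ℝ W₂] [AddCommGroup E] [Module ℝ E]
    {L₁ : W₁ →ₗ[ℝ] E} {L₂ : W₂ →ₗ[ℝ] E} {C₁ : Set W₁} {C₂ : Set W₂}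
    (h : Transversal (L₁ '' C₁) (L₂ '' C₂)) : FiniteDimensional ℝ E :=
  Module.Finite.of_surjective (L₁ ∘ₗ LinearMap.fst ℝ W₁ W₂ - L₂ ∘ₗ LinearMap.snd ℝ W₁ W₂)
    fun v => (h.surjOn_sub (mem_univ v)).imp fun _ hc => hc.2

lemma Transversal.frequently_eq [NormedAddCommGroup W₁] [NormedSpace ℝ W₁]
    [NormedAddCommGroup W₂] [NormedSpace ℝ W₂] [NormedAddCommGroup E] [NormedSpace ℝ E]
    [FiniteDimensional ℝ E] {C₁ D₁ : Set W₁} {C₂ D₂ : Set W₂} {F₁ : W₁ → E} {F₂ : W₂ → E}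
    {L₁ : W₁ →L[ℝ] E} {L₂ : W₂ →L[ℝ] E} (hL : Transversal (L₁ '' C₁) (L₂ '' C₂))
    (hC₁ : IsConvexCone C₁) (hC₂ : IsConvexCone C₂) (hD₁ : D₁ ∈ 𝓝[C₁] 0) (hD₂ : D₂ ∈ 𝓝[C₂] 0)
    (hcont₁ : ContinuousOn F₁ D₁) (hcont₂ : ContinuousOn F₂ D₂)
    (hF₁ : HasFDerivWithinAt F₁ L₁ C₁ 0) (hF₂ : HasFDerivWithinAt F₂ L₂ C₂ 0)
    (hF : F₁ 0 = F₂ 0) {c₁ : W₁} {c₂ : W₂} (hc₁ : c₁ ∈ C₁) (hc₂ : c₂ ∈ C₂) (hc : L₁ c₁ = L₂ c₂) :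
    ∃ᶠ p : ℝ × W₁ × W₂ in 𝓝[>] 0 ×ˢ (𝓝[C₁] c₁ ×ˢ 𝓝[C₂] c₂),
      F₁ (p.1 • p.2.1) = F₂ (p.1 • p.2.2) := by
  have hcont : ContinuousOn (fun c : W₁ × W₂ => F₁ c.1 - F₂ c.2) (D₁ ×ˢ D₂) :=
    (hcont₁.comp continuousOn_fst fun _ hc => hc.1).sub
      (hcont₂.comp continuousOn_snd fun _ hc => hc.2)
  have hderiv : HasFDerivWithinAt (fun c : W₁ × W₂ => F₁ c.1 - F₂ c.2)
      (L₁ ∘L .fst ℝ W₁ W₂ - L₂ ∘L .snd ℝ W₁ W₂) (C₁ ×ˢ C₂) 0 :=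
    (hF₁.comp (0 : W₁ × W₂) hasFDerivWithinAt_fst fun _ hc => hc.1).sub
      (hF₂.comp (0 : W₁ × W₂) hasFDerivWithinAt_snd fun _ hc => hc.2)
  have hD : D₁ ×ˢ D₂ ∈ 𝓝[C₁ ×ˢ C₂] 0 := nhdsWithin_prod hD₁ hD₂
  have hfreq := (hC₁.prod hC₂).frequently_eq hD hcont hderiv hL.surjOn_sub
    (c₀ := (c₁, c₂)) ⟨hc₁, hc₂⟩ (sub_eq_zero.2 hc)
  rw [nhdsWithin_prod_eq] at hfreq
  simpa only [Prod.smul_fst, Prod.smul_snd, Prod.fst_zero, Prod.snd_zero, hF, sub_self, sub_eq_zero]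
    using hfreq

lemma StronglyTransversal.exists_ne_zero [AddCommGroup E] [Module ℝ E] {K₁ K₂ : Set E}
    (h : StronglyTransversal K₁ K₂) (h₁ : 0 ∈ K₁) (h₂ : 0 ∈ K₂) : ∃ k ∈ K₁ ∩ K₂, k ≠ 0 := by
  by_contra! hzero
  exact h.2 (eq_singleton_iff_unique_mem.2 ⟨⟨h₁, h₂⟩, hzero⟩)

end Transversal

section BoltyanskiCone

variable {E : Type*} [NormedAddCommGroup E] [NormedSpace ℝ E]

lemma IsBoltyanskiCone.exists_hasFDerivWithinAt {A K : Set E} {y : E}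
    (h : IsBoltyanskiCone A y K) :
    ∃ (m : ℕ) (C D : Set (EuclideanSpace ℝ (Fin m))) (L : EuclideanSpace ℝ (Fin m) →L[ℝ] E)
      (F : EuclideanSpace ℝ (Fin m) → E), IsConvexCone C ∧ K = L '' C ∧ D ∈ 𝓝[C] 0 ∧
      ContinuousOn F D ∧ MapsTo F D A ∧ F 0 = y ∧ HasFDerivWithinAt F L C 0 := by
  obtain ⟨m, C, L, δ, F, hC, rfl, hδ, hcont, hmaps, rfl, ho⟩ := h
  have hball : closedBall 0 δ ∈ 𝓝[C] 0 := nhdsWithin_le_nhds (closedBall_mem_nhds 0 hδ)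
  refine ⟨m, C, C ∩ closedBall 0 δ, L.toContinuousLinearMap, F, hC, rfl,
    inter_mem self_mem_nhdsWithin hball, hcont, hmaps, rfl, .of_isLittleO ?_⟩
  rw [nhdsWithin_inter_of_mem' hball] at ho
  simpa using ho

theorem not_locally_separated_of_stronglyTransversal_general {A₁ A₂ K₁ K₂ : Set E} {x : E}
    (h₁ : IsBoltyanskiCone A₁ x K₁) (h₂ : IsBoltyanskiCone A₂ x K₂)
    (hst : StronglyTransversal K₁ K₂) : ¬ LocallySeparated A₁ A₂ x := by
  rintro ⟨N, hN, hsep⟩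
  obtain ⟨m₁, C₁, D₁, L₁, F₁, hC₁, rfl, hD₁, hcont₁, hmaps₁, hx₁, hF₁⟩ :=
    h₁.exists_hasFDerivWithinAt
  obtain ⟨m₂, C₂, D₂, L₂, F₂, hC₂, rfl, hD₂, hcont₂, hmaps₂, hx₂, hF₂⟩ :=
    h₂.exists_hasFDerivWithinAt
  have : FiniteDimensional ℝ E :=
    Transversal.finiteDimensional (L₁ := L₁.toLinearMap) (L₂ := L₂.toLinearMap) hst.1
  obtain ⟨k, ⟨⟨c₁, hc₁, hk₁⟩, c₂, hc₂, hk₂⟩, hk⟩ :=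
    hst.exists_ne_zero ⟨0, hC₁.1, map_zero L₁⟩ ⟨0, hC₂.1, map_zero L₂⟩
  have hcoincide := hst.1.frequently_eq hC₁ hC₂ hD₁ hD₂ hcont₁ hcont₂ hF₁ hF₂
    (hx₁.trans hx₂.symm) hc₁ hc₂ (hk₁.trans hk₂.symm)
  have hproj₁ := (tendsto_id (x := 𝓝[>] (0 : ℝ))).prodMap
    (tendsto_fst (f := 𝓝[C₁] c₁) (g := 𝓝[C₂] c₂))
  have hproj₂ := (tendsto_id (x := 𝓝[>] (0 : ℝ))).prodMap
    (tendsto_snd (f := 𝓝[C₁] c₁) (g := 𝓝[C₂] c₂))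
  have hA₁N : ∀ᶠ c in 𝓝[C₁] 0, F₁ c ∈ A₁ ∩ N :=
    inter_mem (mem_of_superset hD₁ hmaps₁) (hF₁.continuousWithinAt (hx₁ ▸ hN))
  have hA₂ : ∀ᶠ c in 𝓝[C₂] 0, F₂ c ∈ A₂ := mem_of_superset hD₂ hmaps₂
  obtain ⟨p, heq, ⟨hpA₁, hpN⟩, hpA₂, hne⟩ := (hcoincide.and_eventually <|
    (((hC₁.tendsto_smul c₁).comp hproj₁).eventually hA₁N).and <|
    (((hC₂.tendsto_smul c₂).comp hproj₂).eventually hA₂).and <|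
    hproj₁.eventually (hC₁.eventually_ne hF₁ (hk₁.trans_ne hk))).exists
  exact hne ((hsep.subset ⟨⟨hpA₁, heq ▸ hpA₂⟩, hpN⟩).trans hx₁.symm)

end BoltyanskiCone

/-- If the Boltyanski approximating cones at a common point are strongly
transversal, then the sets are not locally separated there. -/
theorem not_locally_separated_of_stronglyTransversal {n : ℕ}
    (A₁ A₂ K₁ K₂ : Set (EuclideanSpace ℝ (Fin n))) (x : EuclideanSpace ℝ (Fin n))
    (hx : x ∈ A₁ ∩ A₂)
    (h₁ : IsBoltyanskiCone A₁ x K₁) (h₂ : IsBoltyanskiCone A₂ x K₂)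
    (hst : StronglyTransversal K₁ K₂) :
    ¬ LocallySeparated A₁ A₂ x :=
  not_locally_separated_of_stronglyTransversal_general h₁ h₂ hst
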